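/- Let H be a finite-dimensional complex inner product space, N ∈ ℕ, let X_1,…,X_N be pairwise commuting binary observables on H, let Z_1,…,Z_N be pairwise commuting binary observables on H, fix ψ ∈ H, and let Φ be the extracted global vector. Then for every linear operator M on Q_N: ⟨Φ, (Id_H ⊗ Id_{Q_N} ⊗ M) Φ⟩ = 4^{−N} · Σ_{r',s',r'',s'' ∈ {0,1}^N} (−1)^{(r'⊕r'')·s''} · ⟨ψ, Z(s') X(r'⊕r'') Z(s'') ψ⟩ · ⟨φ+_N, ((σz(s'⊕s'') σx(r'⊕r'')) ⊗ M) φ+_N⟩. -/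

import Mathlib

open scoped Matrix Kronecker ComplexConjugate

noncomputable section

/-- Bit vectors of length `N`, i.e. elements of `{0,1}^N`. -/
abbrev BV (N : ℕ) := Fin N → Bool

/-- The space `Q_N` of functions `{0,1}^N → ℂ`. -/
abbrev QV (N : ℕ) := BV N → ℂ

/-- Linear operators on `Q_N`, represented as matrices in the standard basis. -/
abbrev QOp (N : ℕ) := Matrix (BV N) (BV N) ℂ

/-- Bitwise XOR of bit vectors. -/
def bvXor {N : ℕ} (x r : BV N) : BV N := fun i => xor (x i) (r i)

/-- The sign `(-1)^{s·x}` where `s·x = Σ_i s_i x_i mod 2`. -/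
def bSign {N : ℕ} (s x : BV N) : ℂ :=
  (-1 : ℂ) ^ (Finset.univ.filter fun i => s i = true ∧ x i = true).card

/-- The standard basis vector `e_x` of `Q_N`. -/
def eVec {N : ℕ} (x : BV N) : QV N := fun y => if y = x then 1 else 0

/-- Tensor product of two vectors (as functions). -/
def tensVec {α β : Type*} (f : α → ℂ) (g : β → ℂ) : α × β → ℂ := fun p => f p.1 * g p.2

/-- The Pauli parity operator `σx(r)`, sending `e_x` to `e_{x ⊕ r}`. -/
def sigmaX {N : ℕ} (r : BV N) : QOp N :=
  Matrix.of fun y x => if y = bvXor x r then 1 else 0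

/-- The Pauli parity operator `σz(s)`, sending `e_x` to `(-1)^{s·x} e_x`. -/
def sigmaZ {N : ℕ} (s : BV N) : QOp N :=
  Matrix.diagonal fun x => bSign s x

/-- The scalar `2^{-N/2}`. -/
def invSqrt2pow (N : ℕ) : ℂ := (((Real.sqrt 2)⁻¹ : ℝ) : ℂ) ^ N

/-- The maximally entangled state `φ⁺_N = 2^{-N/2} Σ_x e_x ⊗ e_x`. -/
def phiPlus (N : ℕ) : BV N × BV N → ℂ :=
  invSqrt2pow N • ∑ x : BV N, tensVec (eVec x) (eVec x)

/-- The standard (complex) inner product on a finite function space. -/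
def qInner {α : Type*} [Fintype α] (f g : α → ℂ) : ℂ :=
  ∑ x, (starRingEnd ℂ) (f x) * g x

/-- The norm associated to `qInner`. -/
def qNorm {α : Type*} [Fintype α] (f : α → ℂ) : ℝ :=
  Real.sqrt (qInner f f).re

/-- A binary observable: a self-adjoint operator squaring to the identity. -/
def IsBinaryObs {ι : Type*} [Fintype ι] [DecidableEq ι] (O : Matrix ι ι ℂ) : Prop :=
  O.IsHermitian ∧ O * O = 1

/-- For pairwise commuting operators `X i`, the parity product `X(r) = ∏_{i : r_i = 1} X_i`. -/
def obsProd {n : ℕ} {ι : Type*} [Fintype ι] [DecidableEq ι]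
    (X : Fin n → Matrix ι ι ℂ) (hX : ∀ i j, Commute (X i) (X j)) (r : BV n) :
    Matrix ι ι ℂ :=
  (Finset.univ.filter fun i => r i = true).noncommProd X fun i _ j _ _ => hX i j

/-- The set of bit vectors supported on `R`. -/
def suppSet {N : ℕ} (R : Finset (Fin N)) : Finset (BV N) :=
  Finset.univ.filter fun u => ∀ i, u i = true → i ∈ R

/-- The projector `Π^{σx}_u = 2^{-|R|} Σ_{u' supported on R} (-1)^{u·u'} σx(u')`. -/
def projPauliX {N : ℕ} (R : Finset (Fin N)) (u : BV N) : QOp N :=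
  ((2 : ℂ) ^ R.card)⁻¹ • ∑ u' ∈ suppSet R, bSign u u' • sigmaX u'

/-- The projector `Π^{σz}_v = 2^{-|S|} Σ_{v' supported on S} (-1)^{v·v'} σz(v')`. -/
def projPauliZ {N : ℕ} (S : Finset (Fin N)) (v : BV N) : QOp N :=
  ((2 : ℂ) ^ S.card)⁻¹ • ∑ v' ∈ suppSet S, bSign v v' • sigmaZ v'

/-- The projector `Π^X_u = 2^{-|R|} Σ_{u' supported on R} (-1)^{u·u'} X(u')`
for a family of commuting binary observables. -/
def projObs {N : ℕ} {ι : Type*} [Fintype ι] [DecidableEq ι]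
    (X : Fin N → Matrix ι ι ℂ) (hX : ∀ i j, Commute (X i) (X j))
    (R : Finset (Fin N)) (u : BV N) : Matrix ι ι ℂ :=
  ((2 : ℂ) ^ R.card)⁻¹ • ∑ u' ∈ suppSet R, bSign u u' • obsProd X hX u'

/-- The extracted global vector
`Φ = 2^{-N} Σ_{r,s} (X(r)Z(s) ⊗ σx(r)σz(s) ⊗ Id)(ψ ⊗ φ⁺_N)`. -/
def extractedVec {N : ℕ} {ι : Type*} [Fintype ι] [DecidableEq ι]
    (X Z : Fin N → Matrix ι ι ℂ)
    (hX : ∀ i j, Commute (X i) (X j)) (hZ : ∀ i j, Commute (Z i) (Z j))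
    (ψ : ι → ℂ) : ι × BV N × BV N → ℂ :=
  ((2 : ℂ) ^ N)⁻¹ • ∑ r : BV N, ∑ s : BV N,
    ((obsProd X hX r * obsProd Z hZ s) ⊗ₖ ((sigmaX r * sigmaZ s) ⊗ₖ (1 : QOp N))).mulVec
      (tensVec ψ (phiPlus N))


theorem obsProd_eq_ite {n : ℕ} {ι : Type*} [Fintype ι] [DecidableEq ι]
    (X : Fin n → Matrix ι ι ℂ) (hX : ∀ i j, Commute (X i) (X j)) (r : BV n)
    (s : Finset (Fin n)) (h1) (h2) :
    (s.filter fun i => r i = true).noncommProd X h1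
      = s.noncommProd (fun i => if r i = true then X i else 1) h2 := by
  induction s using Finset.induction_on with
  | empty => exact (Finset.noncommProd_congr (Finset.filter_empty _) (fun _ _ => rfl) h1).trans rfl
  | insert a s ha ih =>
    rw [Finset.noncommProd_insert_of_notMem _ _ _ _ ha]
    have h1' : (↑(s.filter fun i => r i = true) : Set (Fin n)).Pairwise
        (Function.onFun Commute X) := fun i _ j _ _ => hX i j
    rw [← ih h1']
    by_cases h : r a = true
    · have e : (insert a s).filter (fun i => r i = true)
          = insert a (s.filter fun i => r i = true) := by
        rw [Finset.filter_insert, if_pos h]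
      have hn : a ∉ s.filter (fun i => r i = true) := by simp [ha]
      rw [if_pos h]
      exact (Finset.noncommProd_congr e (fun _ _ => rfl) h1).trans
        (Finset.noncommProd_insert_of_notMem _ _ _ _ hn)
    · have e : (insert a s).filter (fun i => r i = true)
          = (s.filter fun i => r i = true) := by
        rw [Finset.filter_insert, if_neg h]
      rw [if_neg h, one_mul]
      exact Finset.noncommProd_congr e (fun _ _ => rfl) h1

theorem ite_comm {n : ℕ} {ι : Type*} [Fintype ι] [DecidableEq ι]
    (X : Fin n → Matrix ι ι ℂ) (hX : ∀ i j, Commute (X i) (X j)) (r r' : BV n) (i j : Fin n) :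
    Commute (if r i = true then X i else 1) (if r' j = true then X j else 1) := by
  split_ifs <;> simp [hX]

theorem obsProd_mul {n : ℕ} {ι : Type*} [Fintype ι] [DecidableEq ι]
    (X : Fin n → Matrix ι ι ℂ) (hobs : ∀ i, IsBinaryObs (X i))
    (hX : ∀ i j, Commute (X i) (X j)) (r r' : BV n) :
    obsProd X hX r * obsProd X hX r' = obsProd X hX (bvXor r r') := by
  have key : ∀ t : BV n, obsProd X hX t = Finset.univ.noncommProd
      (fun i => if t i = true then X i else 1) (fun i _ j _ _ => ite_comm X hX t t i j) :=
    fun t => obsProd_eq_ite X hX t _ _ _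
  rw [key, key, key]
  refine (Finset.noncommProd_mul_distrib _ _ _ _
    fun i _ j _ _ => ite_comm X hX _ _ i j).symm.trans ?_
  refine Finset.noncommProd_congr rfl (fun i _ => ?_) _
  have := (hobs i).2
  simp only [Pi.mul_apply, bvXor]
  rcases Bool.eq_false_or_eq_true (r i) with hs | hs <;>
    rcases Bool.eq_false_or_eq_true (r' i) with ht | ht <;> simp [hs, ht, this]

theorem noncommProd_herm {n : ℕ} {ι : Type*} [Fintype ι] [DecidableEq ι]
    (X : Fin n → Matrix ι ι ℂ) (hobs : ∀ i, IsBinaryObs (X i))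
    (hX : ∀ i j, Commute (X i) (X j)) (s : Finset (Fin n)) (h) :
    (s.noncommProd X h)ᴴ = s.noncommProd X h := by
  induction s using Finset.induction_on with
  | empty => simp
  | insert a s ha ih =>
    rw [Finset.noncommProd_insert_of_notMem _ _ _ _ ha, Matrix.conjTranspose_mul, ih,
      (hobs a).1.eq]
    exact ((Finset.noncommProd_commute _ _ _ _ fun i _ => hX a i).symm).eq

theorem obsProd_herm {n : ℕ} {ι : Type*} [Fintype ι] [DecidableEq ι]
    (X : Fin n → Matrix ι ι ℂ) (hobs : ∀ i, IsBinaryObs (X i))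
    (hX : ∀ i j, Commute (X i) (X j)) (r : BV n) :
    (obsProd X hX r)ᴴ = obsProd X hX r :=
  noncommProd_herm X hobs hX _ _

theorem sigmaZ_herm {N : ℕ} (s : BV N) : (sigmaZ s)ᴴ = sigmaZ s := by
  unfold sigmaZ
  rw [Matrix.diagonal_conjTranspose]
  congr 1
  ext x
  simp [bSign]

theorem eq_bvXor_iff {N : ℕ} (x y r : BV N) : y = bvXor x r ↔ x = bvXor y r := by
  constructor <;> (rintro rfl; ext i; simp [bvXor])

theorem sigmaX_herm {N : ℕ} (r : BV N) : (sigmaX r)ᴴ = sigmaX r := by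
  ext x y
  simp only [sigmaX, Matrix.conjTranspose_apply, Matrix.of_apply, eq_bvXor_iff x y r]
  split_ifs <;> simp

theorem sigmaX_mul {N : ℕ} (r r' : BV N) : sigmaX r * sigmaX r' = sigmaX (bvXor r r') := by
  ext x y
  simp only [sigmaX, Matrix.mul_apply, Matrix.of_apply, mul_ite, mul_one, mul_zero,
    Finset.sum_ite_eq', Finset.sum_ite_eq, Finset.mem_univ, if_true]
  congr 2
  ext i
  simp [bvXor]
  cases y i <;> cases r i <;> cases r' i <;> rfl

theorem bSign_eq_prod {N : ℕ} (s x : BV N) :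
    bSign s x = ∏ i, if s i = true ∧ x i = true then (-1 : ℂ) else 1 := by
  rw [bSign, ← Finset.prod_filter, Finset.prod_const]

theorem bSign_comm {N : ℕ} (s x : BV N) : bSign s x = bSign x s := by
  simp only [bSign, and_comm]

theorem bSign_xor {N : ℕ} (s t x : BV N) :
    bSign (bvXor s t) x = bSign s x * bSign t x := by
  simp only [bSign_eq_prod, ← Finset.prod_mul_distrib]
  refine Finset.prod_congr rfl fun i _ => ?_
  simp only [bvXor]
  rcases Bool.eq_false_or_eq_true (s i) with hs | hs <;>
    rcases Bool.eq_false_or_eq_true (t i) with ht | ht <;>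
    rcases Bool.eq_false_or_eq_true (x i) with hx | hx <;> simp [hs, ht, hx]

theorem bSign_sq {N : ℕ} (s x : BV N) : bSign s x * bSign s x = 1 := by
  rw [bSign, ← mul_pow]; simp

theorem sigmaZ_mul {N : ℕ} (s t : BV N) : sigmaZ s * sigmaZ t = sigmaZ (bvXor s t) := by
  simp only [sigmaZ, Matrix.diagonal_mul_diagonal, bSign_xor]

theorem sigmaX_mul_sigmaZ {N : ℕ} (r s : BV N) :
    sigmaX r * sigmaZ s = bSign r s • (sigmaZ s * sigmaX r) := by
  ext x y
  simp only [sigmaX, sigmaZ, Matrix.mul_diagonal, Matrix.smul_apply, Matrix.diagonal_mul,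
    Matrix.of_apply, smul_eq_mul]
  split_ifs with h
  · subst h
    rw [bSign_comm s (bvXor y r), bSign_xor, bSign_comm y s]
    linear_combination (-bSign s y) * bSign_sq r s
  · simp

theorem qInner_eq {α : Type*} [Fintype α] (f g : α → ℂ) : qInner f g = star f ⬝ᵥ g := rfl

theorem qInner_mulVec {α : Type*} [Fintype α] (A B : Matrix α α ℂ) (u v : α → ℂ) :
    qInner (A.mulVec u) (B.mulVec v) = qInner u ((Aᴴ * B).mulVec v) := by
  rw [qInner_eq, qInner_eq, Matrix.star_mulVec, ← Matrix.dotProduct_mulVec, Matrix.mulVec_mulVec]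

theorem kron_mulVec_tens {α β : Type*} [Fintype α] [Fintype β] (A : Matrix α α ℂ)
    (B : Matrix β β ℂ) (u : α → ℂ) (v : β → ℂ) :
    (A ⊗ₖ B).mulVec (tensVec u v) = tensVec (A.mulVec u) (B.mulVec v) := by
  ext ⟨i, j⟩
  simp only [Matrix.mulVec, dotProduct, tensVec, Matrix.kroneckerMap_apply,
    Fintype.sum_prod_type, Finset.sum_mul_sum]
  exact Finset.sum_congr rfl fun _ _ => Finset.sum_congr rfl fun _ _ => by ring

theorem qInner_tens {α β : Type*} [Fintype α] [Fintype β] (u u' : α → ℂ) (v v' : β → ℂ) :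
    qInner (tensVec u v) (tensVec u' v') = qInner u u' * qInner v v' := by
  simp only [qInner, tensVec, Fintype.sum_prod_type, Finset.sum_mul_sum, map_mul]
  exact Finset.sum_congr rfl fun _ _ => Finset.sum_congr rfl fun _ _ => by ring

/-- expansion of `⟨Φ, (Id ⊗ Id ⊗ M) Φ⟩` for the extracted vector `Φ`. -/
theorem extractedVec_operator_expansion {N : ℕ} {ι : Type*} [Fintype ι] [DecidableEq ι]
    (X Z : Fin N → Matrix ι ι ℂ)
    (hXobs : ∀ i, IsBinaryObs (X i)) (hZobs : ∀ i, IsBinaryObs (Z i))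
    (hX : ∀ i j, Commute (X i) (X j)) (hZ : ∀ i j, Commute (Z i) (Z j))
    (ψ : ι → ℂ) (M : QOp N) :
    qInner (extractedVec X Z hX hZ ψ)
        (((1 : Matrix ι ι ℂ) ⊗ₖ ((1 : QOp N) ⊗ₖ M)).mulVec (extractedVec X Z hX hZ ψ))
      = ((4 : ℂ) ^ N)⁻¹ * ∑ r' : BV N, ∑ s' : BV N, ∑ r'' : BV N, ∑ s'' : BV N,
          bSign (bvXor r' r'') s''
            * qInner ψ ((obsProd Z hZ s' * obsProd X hX (bvXor r' r'')
                * obsProd Z hZ s'').mulVec ψ)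
            * qInner (phiPlus N)
                (((sigmaZ (bvXor s' s'') * sigmaX (bvXor r' r'')) ⊗ₖ M).mulVec (phiPlus N)) := by
  have hterm : ∀ r' s' r'' s'' : BV N,
      qInner (((obsProd X hX r' * obsProd Z hZ s') ⊗ₖ
          ((sigmaX r' * sigmaZ s') ⊗ₖ (1 : QOp N))).mulVec (tensVec ψ (phiPlus N)))
        (((1 : Matrix ι ι ℂ) ⊗ₖ ((1 : QOp N) ⊗ₖ M)).mulVec
          (((obsProd X hX r'' * obsProd Z hZ s'') ⊗ₖ
          ((sigmaX r'' * sigmaZ s'') ⊗ₖ (1 : QOp N))).mulVec (tensVec ψ (phiPlus N))))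
      = bSign (bvXor r' r'') s''
            * qInner ψ ((obsProd Z hZ s' * obsProd X hX (bvXor r' r'')
                * obsProd Z hZ s'').mulVec ψ)
            * qInner (phiPlus N)
                (((sigmaZ (bvXor s' s'') * sigmaX (bvXor r' r'')) ⊗ₖ M).mulVec (phiPlus N)) := by
    intro r' s' r'' s''
    have e1 : (obsProd X hX r' * obsProd Z hZ s')ᴴ * (obsProd X hX r'' * obsProd Z hZ s'')
        = obsProd Z hZ s' * obsProd X hX (bvXor r' r'') * obsProd Z hZ s'' := by
      rw [Matrix.conjTranspose_mul, obsProd_herm X hXobs, obsProd_herm Z hZobs,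
        ← obsProd_mul X hXobs]
      simp only [mul_assoc]
    have e2 : (sigmaX r' * sigmaZ s')ᴴ * (sigmaX r'' * sigmaZ s'')
        = bSign (bvXor r' r'') s'' • (sigmaZ (bvXor s' s'') * sigmaX (bvXor r' r'')) := by
      rw [Matrix.conjTranspose_mul, sigmaX_herm, sigmaZ_herm, mul_assoc, ← mul_assoc (sigmaX r'),
        sigmaX_mul, sigmaX_mul_sigmaZ, mul_smul_comm, ← mul_assoc, sigmaZ_mul]
    rw [Matrix.mulVec_mulVec, qInner_mulVec, ← Matrix.mul_kronecker_mul,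
      ← Matrix.mul_kronecker_mul, Matrix.conjTranspose_kronecker, Matrix.conjTranspose_kronecker,
      ← Matrix.mul_kronecker_mul, ← Matrix.mul_kronecker_mul]
    simp only [one_mul, mul_one, Matrix.conjTranspose_one]
    rw [e1, e2, kron_mulVec_tens, qInner_tens, Matrix.smul_kronecker, Matrix.smul_mulVec]
    simp only [qInner_eq, dotProduct_smul, smul_eq_mul]
    ring
  have h4 : ((4 : ℂ) ^ N)⁻¹ = ((2 : ℂ) ^ N)⁻¹ * ((2 : ℂ) ^ N)⁻¹ := by
    rw [← mul_inv, ← mul_pow]; norm_num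
  have hstar : star (((2 : ℂ) ^ N)⁻¹) = ((2 : ℂ) ^ N)⁻¹ := by simp
  simp only [← hterm, h4, extractedVec]
  simp only [qInner_eq, star_smul, hstar, Matrix.mulVec_smul, smul_dotProduct, dotProduct_smul,
    smul_eq_mul, mul_assoc]
  congr 2
  simp only [star_sum, Matrix.mulVec_sum]
  simp only [sum_dotProduct]
  simp only [dotProduct_sum]

end
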